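/- If S is a simple semilattice with one operator (i.e., ⟨S,+,0,f⟩ has exactly two congruences), then |S| = 2. -/

import Mathlib

variable {S : Type*} [SemilatticeSup S] [OrderBot S]

/-- An operator on a join semilattice with zero: a unary `(⊔,0)`-endomorphism. -/
def IsOperator (f : S → S) : Prop :=
  (∀ x y : S, f (x ⊔ y) = f x ⊔ f y) ∧ f ⊥ = ⊥

/-- A congruence of a join semilattice with zero and a set `F` of operators. -/
def IsCong (F : Set (S → S)) (θ : S → S → Prop) : Prop :=
  Equivalence θ ∧ (∀ x y z : S, θ x y → θ (x ⊔ z) (y ⊔ z)) ∧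
    ∀ f ∈ F, ∀ x y, θ x y → θ (f x) (f y)

/-!
For an operator `f` commuting with all the given ones, `f x = f y` is a congruence, so simplicity
forces `f` to be injective or zero, as in Schur's lemma. When every given operator is of one of
these two kinds, the partition of `S` into `{⊥}` and its complement is a congruence; it separates
`⊥` from the other elements, so it must be the identity, and `S` has a single element besides `⊥`.
-/

theorem IsOperator.isCong_ker {F : Set (S → S)} {f : S → S} (hf : IsOperator f)
    (hcomm : ∀ g ∈ F, Function.Commute f g) : IsCong F (fun x y => f x = f y) := by
  refine ⟨eq_equivalence.comap f, fun x y z hxy => ?_, fun g hg x y hxy => ?_⟩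
  · simp only [hf.1, hxy]
  · simp only [(hcomm g hg).eq, hxy]

theorem IsOperator.injective_or_forall_eq_bot {F : Set (S → S)} {f : S → S} (hf : IsOperator f)
    (hcomm : ∀ g ∈ F, Function.Commute f g)
    (hsimple : ∀ θ : S → S → Prop, IsCong F θ →
      θ = (fun x y => x = y) ∨ θ = (fun _ _ => True)) :
    Function.Injective f ∨ ∀ x, f x = ⊥ := by
  refine (hsimple _ (hf.isCong_ker hcomm)).imp (fun hker x y => ?_) (fun hker x => ?_)
  · exact (congrFun₂ hker x y).mp
  · have hx : f x = f ⊥ := of_eq_true (congrFun₂ hker x ⊥)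
    exact hx.trans hf.2

theorem isCong_eq_bot_iff {F : Set (S → S)}
    (hF : ∀ f ∈ F, (∀ x, f x = ⊥ ↔ x = ⊥) ∨ ∀ x, f x = ⊥) :
    IsCong F (fun x y => x = ⊥ ↔ y = ⊥) := by
  refine ⟨⟨fun _ => Iff.rfl, Iff.symm, Iff.trans⟩, fun x y z hxy => ?_, fun f hf x y hxy => ?_⟩
  · simp only [sup_eq_bot_iff, hxy]
  · rcases hF f hf with hreflect | hzero
    · rwa [hreflect, hreflect]
    · rw [hzero, hzero]

theorem simple_semilattice_with_operator_two_elements_general [Nontrivial S] (F : Set (S → S))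
    (hF : ∀ f ∈ F, IsOperator f) (hcomm : ∀ f ∈ F, ∀ g ∈ F, Function.Commute f g)
    (hsimple : ∀ θ : S → S → Prop, IsCong F θ →
      θ = (fun x y => x = y) ∨ θ = (fun _ _ => True)) :
    ∃ a b : S, a ≠ b ∧ ∀ x : S, x = a ∨ x = b := by
  have hcong : IsCong F (fun x y => x = ⊥ ↔ y = ⊥) := isCong_eq_bot_iff fun f hf =>
    ((hF f hf).injective_or_forall_eq_bot (hcomm f hf) hsimple).imp_left
      fun hinj _ => hinj.eq_iff' (hF f hf).2
  obtain ⟨c, hc⟩ := exists_ne (⊥ : S)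
  refine ⟨⊥, c, hc.symm, fun x => or_iff_not_imp_left.mpr fun hx => ?_⟩
  rcases hsimple _ hcong with hid | hfull
  · exact (congrFun₂ hid x c).mp (iff_of_false hx hc)
  · have hc_iff : c = ⊥ ↔ (⊥ : S) = ⊥ := of_eq_true (congrFun₂ hfull c ⊥)
    exact absurd (hc_iff.mpr rfl) hc

/-- If `⟨S,+,0,f⟩` is a simple semilattice with one operator (its only
congruences are the identity and the full relation, and these differ), then
`S` has exactly two elements. -/
theorem simple_semilattice_with_operator_two_elements (f : S → S)
    (hf : IsOperator f)
    (hsimple : ∀ θ : S → S → Prop, IsCong {f} θ →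
      θ = (fun x y => x = y) ∨ θ = (fun _ _ => True))
    (hnontriv : ∃ a b : S, a ≠ b) :
    ∃ a b : S, a ≠ b ∧ ∀ x : S, x = a ∨ x = b := by
  have : Nontrivial S := ⟨hnontriv⟩
  exact simple_semilattice_with_operator_two_elements_general {f} (by simpa using hf)
    (by simp [Function.Commute.refl]) hsimple
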